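/- The Poisson transform h(x) = Σ_{n≥2} E(H_n) x^n e^{-x}/n! satisfies the functional equation h(x) = h(px) + h(qx) e^{-px} + 1 - (1+x)e^{-x} for all x > 0. -/

import Mathlib

open Finset

lemma leader_mean (p q : ℝ) (hq : q = 1 - p) (n : ℕ) :
    ∑ k ∈ range (n + 1), (n.choose k : ℝ) * p ^ k * q ^ (n - k) * k = n * p := by
  have h := congrArg (Polynomial.eval p) (bernsteinPolynomial.sum_smul ℝ n)
  simp only [Polynomial.eval_finsetSum, bernsteinPolynomial, nsmul_eq_mul, Polynomial.eval_mul,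
    Polynomial.eval_natCast, Polynomial.eval_pow, Polynomial.eval_X, Polynomial.eval_sub,
    Polynomial.eval_one] at h
  rw [← h, hq]
  exact sum_congr rfl fun k _ => by ring

lemma leader_bound (p q : ℝ) (hp : 0 < p) (hp1 : p < 1) (hq : q = 1 - p)
    (EH : ℕ → ℝ) (hEH0 : EH 0 = 0) (hEH1 : EH 1 = 0)
    (hrec : ∀ n, 2 ≤ n →
      EH n = 1 + (∑ k ∈ range (n + 1), (n.choose k : ℝ) * p ^ k * q ^ (n - k) * EH k)
        + q ^ n * EH n) (n : ℕ) : |EH n| ≤ 1 / (p * q) * n := by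
  have hq0 : 0 < q := by linarith
  have hq1 : q < 1 := by linarith
  set C := 1 / (p * q) with hC
  have hC0 : 0 < C := by positivity
  have hCpq : C * (p * q) = 1 := by rw [hC]; field_simp
  induction n using Nat.strong_induction_on with
  | _ n ih =>
    rcases Nat.lt_or_ge n 2 with hn | hn
    · interval_cases n
      · simp [hEH0]
      · simp [hEH1, hC0.le]
    · have h1 := hrec n hn
      have hm := leader_mean p q hq n
      rw [sum_range_succ] at h1 hm
      simp only [Nat.choose_self, Nat.cast_one, one_mul, Nat.sub_self, pow_zero, mul_one] at h1 hm
      have hp2 : p ^ n ≤ p ^ 2 := pow_le_pow_of_le_one hp.le hp1.le hn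
      have hq2 : q ^ n ≤ q ^ 2 := pow_le_pow_of_le_one hq0.le hq1.le hn
      have hpq : 0 < p * q := by positivity
      have hd : 0 < 1 - p ^ n - q ^ n := by
        have : 1 - p ^ 2 - q ^ 2 = 2 * (p * q) := by rw [hq]; ring
        linarith
      set S := ∑ k ∈ range n, (n.choose k : ℝ) * p ^ k * q ^ (n - k) * EH k with hS
      have hSb : |S| ≤ C * (n * p - p ^ n * n) := by
        rw [← hm, add_sub_cancel_right, mul_sum]
        refine (abs_sum_le_sum_abs _ _).trans (sum_le_sum fun k hk => ?_)
        rw [abs_mul, abs_of_nonneg (by positivity)]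
        have := mul_le_mul_of_nonneg_left (ih k (mem_range.1 hk))
          (show 0 ≤ (n.choose k : ℝ) * p ^ k * q ^ (n - k) by positivity)
        linarith
      have h2 : (1 - p ^ n - q ^ n) * EH n = 1 + S := by linarith
      have h3 : (1 - p ^ n - q ^ n) * |EH n| ≤ 1 + |S| := by
        rw [← abs_of_pos hd, ← abs_mul, h2]
        exact (abs_add_le _ _).trans (by simp)
      have hn1 : (1 : ℝ) ≤ n := by exact_mod_cast (by omega : 1 ≤ n)
      have h4 : 1 ≤ C * n * (q - q ^ n) := by
        have e : q - q ^ 2 = p * q := by rw [hq]; ring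
        calc (1 : ℝ) ≤ n * (C * (p * q)) := by rw [hCpq]; linarith
          _ = C * n * (q - q ^ 2) := by rw [e]; ring
          _ ≤ _ := by gcongr
      refine le_of_mul_le_mul_left (h3.trans ?_) hd
      have e2 : (1 - p ^ n - q ^ n) * (C * n)
        = C * n * (q - q ^ n) + C * (n * p - p ^ n * n) := by rw [hq]; ring
      linarith

lemma leader_summable (EH : ℕ → ℝ) (C : ℝ) (hb : ∀ n, |EH n| ≤ C * n) (x : ℝ) :
    Summable fun n : ℕ => ‖EH n * x ^ n / n.factorial‖ := by
  have hC : 0 ≤ C := by simpa using (abs_nonneg _).trans (hb 1)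
  refine Summable.of_nonneg_of_le (fun _ => norm_nonneg _) (fun n => ?_)
    ((Real.summable_pow_div_factorial (2 * |x|)).mul_left C)
  have hn : (n : ℝ) ≤ 2 ^ n := by exact_mod_cast Nat.lt_two_pow_self.le
  rw [Real.norm_eq_abs, abs_div, abs_mul, abs_pow, Nat.abs_cast, mul_pow, ← mul_div_assoc]
  rw [← mul_assoc C]
  have := (hb n).trans (mul_le_mul_of_nonneg_left hn hC)
  gcongr

/-- The Poisson transform `h(x) = Σ_{n≥2} E(H_n) x^n e^{-x}/n!` of the expected
costs of the leader election algorithm satisfies the functional equation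
`h(x) = h(px) + h(qx) e^{-px} + 1 - (1+x) e^{-x}` for all `x > 0`. -/
theorem poisson_transform_functional_equation
    (p q : ℝ) (hp : 0 < p) (hp1 : p < 1) (hq : q = 1 - p)
    (EH : ℕ → ℝ) (hEH0 : EH 0 = 0) (hEH1 : EH 1 = 0)
    (hrec : ∀ n, 2 ≤ n →
      EH n = 1 + (∑ k ∈ range (n + 1), (n.choose k : ℝ) * p ^ k * q ^ (n - k) * EH k)
        + q ^ n * EH n)
    (h : ℝ → ℝ)
    (hdef : ∀ x : ℝ, h x = ∑' n : ℕ, EH n * x ^ n / n.factorial * Real.exp (-x)) :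
    ∀ x : ℝ, 0 < x →
      h x = h (p * x) + h (q * x) * Real.exp (-(p * x)) + 1 - (1 + x) * Real.exp (-x) := by
  intro x hx
  have hs := leader_summable EH _ (leader_bound p q hp hp1 hq EH hEH0 hEH1 hrec)
  have hexp : ∀ y : ℝ, HasSum (fun n : ℕ => y ^ n / (n.factorial : ℝ)) (Real.exp y) := by
    intro y
    rw [Real.exp_eq_exp_ℝ]
    exact NormedSpace.expSeries_div_hasSum_exp y
  have hexpn : ∀ y : ℝ, Summable (fun n : ℕ => ‖y ^ n / (n.factorial : ℝ)‖) := fun y =>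
    (hexp y).summable.norm
  set A : ℝ → ℝ := fun y => ∑' n : ℕ, EH n * y ^ n / n.factorial with hA
  have hh : ∀ y, h y = A y * Real.exp (-y) := fun y => by rw [hdef, tsum_mul_right]
  have hAs : ∀ y, HasSum (fun n : ℕ => EH n * y ^ n / n.factorial) (A y) := fun y =>
    (hs y).of_norm.hasSum
  have hprod : HasSum (fun n : ℕ => ∑ k ∈ range (n + 1),
      (EH k * (p * x) ^ k / k.factorial) * ((q * x) ^ (n - k) / ((n - k).factorial : ℝ)))
      (A (p * x) * Real.exp (q * x)) := by
    rw [← (hexp (q * x)).tsum_eq, hA]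
    simp only
    rw [tsum_mul_tsum_eq_tsum_sum_range_of_summable_norm (hs (p * x)) (hexpn (q * x))]
    exact (summable_norm_sum_mul_range_of_summable_norm (hs (p * x)) (hexpn (q * x))).of_norm.hasSum
  have hfin : HasSum (fun n : ℕ => if n ∈ range 2 then x ^ n / (n.factorial : ℝ) else 0) (1 + x) := by
    have := hasSum_sum_of_ne_finset_zero (L := SummationFilter.unconditional ℕ) (s := range 2)
      (f := fun n : ℕ => if n ∈ range 2 then x ^ n / (n.factorial : ℝ) else 0)
      (fun b hb => by simp only [if_neg hb])
    simpa [sum_range_succ] using this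
  have htot := (((hexp x).sub hfin).add hprod).add (hAs (q * x))
  have key : A x = Real.exp x - (1 + x) + A (p * x) * Real.exp (q * x) + A (q * x) := by
    refine (hAs x).unique ?_
    refine Eq.mp (congrArg (fun f : ℕ → ℝ => HasSum f _) (funext fun n => ?_)) htot
    symm
    have hc : ∑ k ∈ range (n + 1),
        (EH k * (p * x) ^ k / k.factorial) * ((q * x) ^ (n - k) / ((n - k).factorial : ℝ))
        = (∑ k ∈ range (n + 1), (n.choose k : ℝ) * p ^ k * q ^ (n - k) * EH k)
          * (x ^ n / n.factorial) := by
      rw [sum_mul]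
      refine sum_congr rfl fun k hk => ?_
      have hkn : k ≤ n := Nat.lt_succ_iff.1 (mem_range.1 hk)
      rw [Nat.cast_choose ℝ hkn]
      have hx' : x ^ n = x ^ k * x ^ (n - k) := by rw [← pow_add, Nat.add_sub_cancel' hkn]
      have := n.factorial_ne_zero
      have := k.factorial_ne_zero
      have := (n - k).factorial_ne_zero
      rw [hx', mul_pow, mul_pow]
      field_simp
    rw [hc]
    rcases Nat.lt_or_ge n 2 with hn | hn
    · interval_cases n <;> simp [hEH0, hEH1, sum_range_succ]
    · rw [if_neg (by simp; omega)]
      have h1 := hrec n hn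
      rw [mul_pow]
      linear_combination (x ^ n / n.factorial) * h1
  rw [hh, hh, hh, key]
  have e1 : Real.exp x * Real.exp (-x) = 1 := by rw [← Real.exp_add]; simp
  have e2 : Real.exp (q * x) * Real.exp (-x) = Real.exp (-(p * x)) := by
    rw [← Real.exp_add, hq]; congr 1; ring
  have e3 : Real.exp (-(q * x)) * Real.exp (-(p * x)) = Real.exp (-x) := by
    rw [← Real.exp_add, hq]; congr 1; ring
  linear_combination e1 + A (p * x) * e2 - A (q * x) * e3
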